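/- Let (Ω, F, P) be a filtered probability space with filtration (F_t)_{t ∈ ℕ}, let ε ∈ (0, 1), let (M_t)_{t ≥ 1} be adapted with M_t ∈ [0, 1] almost surely, and let (λ_t)_{t ≥ 1} be a predictable process with λ_t ∈ [0, 1] almost surely. Assume E[M_t | F_{t−1}] ≥ ε almost surely for all t ≥ 1. Define X_0 = 1 and X_t = ∏_{i=1}^t (1 + λ_i (ε − M_i)). Then for every α ∈ (0, 1), P( ∃ t ≥ 0 : X_t ≥ 1/α ) ≤ α; that is, the hitting-time test that raises a tracking-failure alert as soon as X_t ≥ 1/α has Type-I error (false alert probability) at most α under the null. -/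

import Mathlib

open MeasureTheory Set Finset

/-!
A bet `lam t ≥ 0` on a conditionally unfavourable gain `D t` does not increase expected wealth.
Starting from wealth `1` and never going into debt, the wealth process is therefore a nonnegative
supermartingale, and stopping it when it first reaches `1 / α` shows that this level is reached
with probability at most `α`. The alert statistic is the wealth for the gains `D t = ε - M t`.
Nonnegativity of the wealth also makes it integrable, so the gains need not be bounded.
-/

section Ville

variable {Ω : Type*} {mΩ : MeasurableSpace Ω} {μ : Measure Ω}

theorem measure_ge_le_ofReal_integral_div {f : Ω → ℝ} (hf : Integrable f μ) (hf_nonneg : 0 ≤ᵐ[μ] f)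
    {c : ℝ} (hc : 0 < c) :
    μ {ω | c ≤ f ω} ≤ ENNReal.ofReal ((∫ ω, f ω ∂μ) / c) := by
  rw [ENNReal.ofReal_div_of_pos hc, ofReal_integral_eq_lintegral_ofReal hf hf_nonneg]
  calc μ {ω | c ≤ f ω} ≤ μ {ω | ENNReal.ofReal c ≤ ENNReal.ofReal (f ω)} :=
        measure_mono fun _ h ↦ ENNReal.ofReal_le_ofReal h
    _ ≤ (∫⁻ ω, ENNReal.ofReal (f ω) ∂μ) / ENNReal.ofReal c :=
        meas_ge_le_lintegral_div hf.aemeasurable.ennreal_ofReal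
          (ENNReal.ofReal_pos.mpr hc).ne' ENNReal.ofReal_ne_top

variable {𝓕 : Filtration ℕ mΩ} [SigmaFiniteFiltration μ 𝓕] {X : ℕ → Ω → ℝ}

theorem measure_exists_le_ge_le_of_supermartingale (hX : Supermartingale X 𝓕 μ)
    (hX_nonneg : ∀ t, 0 ≤ᵐ[μ] X t) {c : ℝ} (hc : 0 < c) (n : ℕ) :
    μ {ω | ∃ t ≤ n, c ≤ X t ω} ≤ ENNReal.ofReal ((∫ ω, X 0 ω ∂μ) / c) := by
  let τ : Ω → ℕ∞ := fun ω ↦ (hittingBtwn X (Set.Ici c) 0 n ω : ℕ)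
  have hτ : IsStoppingTime 𝓕 τ :=
    hX.stronglyAdapted.adapted.isStoppingTime_hittingBtwn measurableSet_Ici
  have hτ_le (ω : Ω) : τ ω ≤ n := Nat.cast_le.mpr (hittingBtwn_le ω)
  have h_nonneg : 0 ≤ᵐ[μ] stoppedValue X τ := by
    filter_upwards [ae_all_iff.mpr hX_nonneg] with ω hω using hω _
  have h_integral : ∫ ω, stoppedValue X τ ω ∂μ ≤ ∫ ω, X 0 ω ∂μ := by
    have := hX.neg.expected_stoppedValue_mono (isStoppingTime_const 𝓕 0) hτ
      (fun _ ↦ zero_le) hτ_le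
    simpa [stoppedValue, integral_neg] using this
  calc μ {ω | ∃ t ≤ n, c ≤ X t ω} ≤ μ {ω | c ≤ stoppedValue X τ ω} :=
        measure_mono fun ω ⟨t, htn, ht⟩ ↦
          stoppedValue_hittingBtwn_mem (s := Set.Ici c) ⟨t, ⟨t.zero_le, htn⟩, ht⟩
    _ ≤ ENNReal.ofReal ((∫ ω, stoppedValue X τ ω ∂μ) / c) :=
        measure_ge_le_ofReal_integral_div
          (integrable_stoppedValue ℕ hτ hX.integrable hτ_le) h_nonneg hc
    _ ≤ ENNReal.ofReal ((∫ ω, X 0 ω ∂μ) / c) := by gcongr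

/-- **Ville's inequality**. -/
theorem measure_exists_ge_le_of_supermartingale (hX : Supermartingale X 𝓕 μ)
    (hX_nonneg : ∀ t, 0 ≤ᵐ[μ] X t) {c : ℝ} (hc : 0 < c) :
    μ {ω | ∃ t, c ≤ X t ω} ≤ ENNReal.ofReal ((∫ ω, X 0 ω ∂μ) / c) := by
  have h_union : {ω | ∃ t, c ≤ X t ω} = ⋃ n, {ω | ∃ t ≤ n, c ≤ X t ω} := by
    ext ω
    simpa using ⟨fun ⟨t, ht⟩ ↦ ⟨t, t, le_rfl, ht⟩, fun ⟨_, t, _, ht⟩ ↦ ⟨t, ht⟩⟩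
  have h_mono : Monotone fun n ↦ {ω | ∃ t ≤ n, c ≤ X t ω} :=
    fun _ _ hmn _ ⟨t, htm, ht⟩ ↦ ⟨t, htm.trans hmn, ht⟩
  rw [h_union, h_mono.measure_iUnion]
  exact iSup_le (measure_exists_le_ge_le_of_supermartingale hX hX_nonneg hc)

end Ville

section Bet

variable {Ω : Type*} {m mΩ : MeasurableSpace Ω} {μ : Measure Ω} {H D Z : Ω → ℝ}

theorem condExp_mul_nonpos (hH : StronglyMeasurable[m] H) (hH_nonneg : 0 ≤ᵐ[μ] H)
    (hD : Integrable D μ) (hHD : Integrable (H * D) μ) (hD_nonpos : μ[D | m] ≤ᵐ[μ] 0) :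
    μ[H * D | m] ≤ᵐ[μ] 0 := by
  filter_upwards [condExp_mul_of_stronglyMeasurable_left hH hHD hD, hH_nonneg, hD_nonpos]
    with ω h_pull hHω hDω
  rw [h_pull]
  exact mul_nonpos_of_nonneg_of_nonpos hHω hDω

theorem setIntegral_mul_nonpos_of_condExp_nonpos (hm : m ≤ mΩ) [SigmaFinite (μ.trim hm)]
    (hH : StronglyMeasurable[m] H) (hH_nonneg : 0 ≤ᵐ[μ] H) (hD : Integrable D μ)
    (hD_nonpos : μ[D | m] ≤ᵐ[μ] 0) {s : Set Ω} (hs : MeasurableSet[m] s)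
    (hHD : IntegrableOn (H * D) s μ) :
    ∫ ω in s, (H * D) ω ∂μ ≤ 0 := by
  have h_indicator : s.indicator (H * D) = s.indicator H * D :=
    funext fun _ ↦ Set.indicator_mul_left s H D
  have h_int : Integrable (s.indicator H * D) μ := h_indicator ▸ hHD.integrable_indicator (hm _ hs)
  have h_nonneg : 0 ≤ᵐ[μ] s.indicator H := by
    filter_upwards [hH_nonneg] with ω hω using Set.indicator_apply_nonneg fun _ ↦ hω
  rw [← integral_indicator (hm _ hs), h_indicator, ← integral_condExp hm]
  exact integral_nonpos_of_ae
    (condExp_mul_nonpos (hH.indicator hs) h_nonneg hD h_int hD_nonpos)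

theorem integrableOn_mul_setOf_le (hH : Measurable H) (hH_nonneg : 0 ≤ᵐ[μ] H)
    (hD : Integrable D μ) (C : ℝ) : IntegrableOn (H * D) {ω | H ω ≤ C} μ := by
  refine hD.integrableOn.bdd_mul (c := C) hH.aestronglyMeasurable ?_
  filter_upwards [ae_restrict_of_ae hH_nonneg,
    ae_restrict_mem (measurableSet_le hH measurable_const)] with ω h_nonneg h_le
  rwa [Real.norm_of_nonneg h_nonneg]

-- On `{H ≤ n}` the bet is bounded, so there `Z + H * D` has integral at most `∫ |Z|`; since
-- `Z + H * D` is nonnegative, this bound survives `n → ∞`.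
theorem integrable_mul_of_condExp_nonpos (hm : m ≤ mΩ) [SigmaFinite (μ.trim hm)]
    (hH : StronglyMeasurable[m] H) (hH_nonneg : 0 ≤ᵐ[μ] H) (hD : Integrable D μ)
    (hD_nonpos : μ[D | m] ≤ᵐ[μ] 0) (hZ : Integrable Z μ) (hZ_add : 0 ≤ᵐ[μ] Z + H * D) :
    Integrable (H * D) μ := by
  let S (n : ℕ) : Set Ω := {ω | H ω ≤ n}
  have hS (n : ℕ) : MeasurableSet[m] (S n) := measurableSet_le hH.measurable measurable_const
  have hS_cover : AECover μ Filter.atTop S :=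
    ⟨.of_forall fun ω ↦ tendsto_natCast_atTop_atTop.eventually_ge_atTop (H ω),
      fun n ↦ hm _ (hS n)⟩
  have h_intOn (n : ℕ) : IntegrableOn (H * D) (S n) μ :=
    integrableOn_mul_setOf_le (hH.mono hm).measurable hH_nonneg hD n
  have h_bound (n : ℕ) : ∫ ω in S n, (Z + H * D) ω ∂μ ≤ ∫ ω, |Z ω| ∂μ := by
    calc ∫ ω in S n, (Z + H * D) ω ∂μ = ∫ ω in S n, Z ω ∂μ + ∫ ω in S n, (H * D) ω ∂μ :=
          integral_add hZ.integrableOn (h_intOn n)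
      _ ≤ ∫ ω in S n, Z ω ∂μ := add_le_of_nonpos_right
          (setIntegral_mul_nonpos_of_condExp_nonpos hm hH hH_nonneg hD hD_nonpos (hS n) (h_intOn n))
      _ ≤ ∫ ω in S n, |Z ω| ∂μ :=
          integral_mono hZ.integrableOn hZ.abs.integrableOn fun ω ↦ le_abs_self (Z ω)
      _ ≤ ∫ ω, |Z ω| ∂μ := setIntegral_le_integral hZ.abs (.of_forall fun ω ↦ abs_nonneg (Z ω))
  have h_sum : Integrable (Z + H * D) μ :=
    hS_cover.integrable_of_integral_bounded_of_nonneg_ae _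
      (fun n ↦ hZ.integrableOn.add (h_intOn n)) hZ_add (.of_forall h_bound)
  simpa using h_sum.sub hZ

end Bet

section Wealth

variable {Ω : Type*}

/-- The wealth at time `t` of a gambler who starts with `1` and in each round `i ≥ 1` stakes the
fraction `lam i` of the current wealth on a bet with gain `D i` per unit staked. Rounds are counted
from `1`. -/
noncomputable def wealth (lam D : ℕ → Ω → ℝ) (t : ℕ) (ω : Ω) : ℝ :=
  ∏ i ∈ Finset.Icc 1 t, (1 + lam i ω * D i ω)

variable {lam D : ℕ → Ω → ℝ}

theorem wealth_zero : wealth lam D 0 = 1 := by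
  ext ω; simp [wealth]

theorem wealth_succ (t : ℕ) :
    wealth lam D (t + 1) = wealth lam D t * (1 + lam (t + 1) * D (t + 1)) := by
  ext ω; simp [wealth, Finset.prod_Icc_succ_top]

theorem wealth_succ_eq_add (t : ℕ) :
    wealth lam D (t + 1) = wealth lam D t + wealth lam D t * lam (t + 1) * D (t + 1) := by
  rw [wealth_succ]; ring

variable {mΩ : MeasurableSpace Ω} {μ : Measure Ω} {𝓕 : Filtration ℕ mΩ}

theorem wealth_nonneg (h_solvent : ∀ t, 0 ≤ᵐ[μ] 1 + lam (t + 1) * D (t + 1)) (t : ℕ) :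
    0 ≤ᵐ[μ] wealth lam D t := by
  induction t with
  | zero => exact .of_forall fun ω ↦ by simp [wealth_zero]
  | succ t ih =>
    filter_upwards [ih, h_solvent t] with ω h_wealth h_factor
    rw [wealth_succ]
    exact mul_nonneg h_wealth h_factor

theorem stronglyAdapted_wealth (hlam : ∀ t, StronglyMeasurable[𝓕 t] (lam (t + 1)))
    (hD : ∀ t, StronglyMeasurable[𝓕 (t + 1)] (D (t + 1))) :
    StronglyAdapted 𝓕 (wealth lam D) := by
  intro t
  induction t with
  | zero => rw [wealth_zero]; exact stronglyMeasurable_one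
  | succ t ih =>
    have h_le : 𝓕 t ≤ 𝓕 (t + 1) := 𝓕.mono t.le_succ
    rw [wealth_succ]
    exact (ih.mono h_le).mul (stronglyMeasurable_one.add (((hlam t).mono h_le).mul (hD t)))

theorem supermartingale_wealth [IsFiniteMeasure μ]
    (hlam : ∀ t, StronglyMeasurable[𝓕 t] (lam (t + 1))) (hlam_nonneg : ∀ t, 0 ≤ᵐ[μ] lam (t + 1))
    (hD : ∀ t, StronglyMeasurable[𝓕 (t + 1)] (D (t + 1))) (hD_int : ∀ t, Integrable (D (t + 1)) μ)
    (hD_nonpos : ∀ t, μ[D (t + 1) | 𝓕 t] ≤ᵐ[μ] 0)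
    (h_solvent : ∀ t, 0 ≤ᵐ[μ] 1 + lam (t + 1) * D (t + 1)) :
    Supermartingale (wealth lam D) 𝓕 μ := by
  have h_adapted := stronglyAdapted_wealth hlam hD
  have h_stake (t : ℕ) : StronglyMeasurable[𝓕 t] (wealth lam D t * lam (t + 1)) :=
    (h_adapted t).mul (hlam t)
  have h_stake_nonneg (t : ℕ) : 0 ≤ᵐ[μ] wealth lam D t * lam (t + 1) := by
    filter_upwards [wealth_nonneg h_solvent t, hlam_nonneg t] with ω hw hl using mul_nonneg hw hl
  have h_gain_int (t : ℕ) (h_int : Integrable (wealth lam D t) μ) :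
      Integrable (wealth lam D t * lam (t + 1) * D (t + 1)) μ :=
    integrable_mul_of_condExp_nonpos (𝓕.le t) (h_stake t) (h_stake_nonneg t) (hD_int t)
      (hD_nonpos t) h_int (wealth_succ_eq_add (lam := lam) t ▸ wealth_nonneg h_solvent (t + 1))
  have h_int (t : ℕ) : Integrable (wealth lam D t) μ := by
    induction t with
    | zero => rw [wealth_zero]; exact integrable_const 1
    | succ t ih => rw [wealth_succ_eq_add]; exact ih.add (h_gain_int t ih)
  refine supermartingale_nat h_adapted h_int fun t ↦ ?_
  rw [wealth_succ_eq_add]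
  filter_upwards [condExp_add (h_int t) (h_gain_int t (h_int t)) (𝓕 t),
    condExp_mul_nonpos (h_stake t) (h_stake_nonneg t) (hD_int t) (h_gain_int t (h_int t))
      (hD_nonpos t)] with ω h_add h_gain
  rw [h_add, Pi.add_apply,
    condExp_of_stronglyMeasurable (𝓕.le t) (h_adapted t) (h_int t)]
  exact add_le_of_nonpos_right h_gain

theorem measure_exists_wealth_ge_le [IsProbabilityMeasure μ]
    (hlam : ∀ t, StronglyMeasurable[𝓕 t] (lam (t + 1))) (hlam_nonneg : ∀ t, 0 ≤ᵐ[μ] lam (t + 1))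
    (hD : ∀ t, StronglyMeasurable[𝓕 (t + 1)] (D (t + 1))) (hD_int : ∀ t, Integrable (D (t + 1)) μ)
    (hD_nonpos : ∀ t, μ[D (t + 1) | 𝓕 t] ≤ᵐ[μ] 0)
    (h_solvent : ∀ t, 0 ≤ᵐ[μ] 1 + lam (t + 1) * D (t + 1)) {α : ℝ} (hα : 0 < α) :
    μ {ω | ∃ t, 1 / α ≤ wealth lam D t ω} ≤ ENNReal.ofReal α := by
  have h_super := supermartingale_wealth hlam hlam_nonneg hD hD_int hD_nonpos h_solvent
  simpa [wealth_zero] using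
    measure_exists_ge_le_of_supermartingale h_super (wealth_nonneg h_solvent) (one_div_pos.mpr hα)

end Wealth

theorem one_add_mul_sub_nonneg {l e m : ℝ} (hl : l ∈ Set.Icc 0 1) (he : 0 ≤ e) (hm : m ≤ 1) :
    0 ≤ 1 + l * (e - m) := by
  nlinarith [hl.1, hl.2]

theorem condExp_const_sub_nonpos {Ω : Type*} {m mΩ : MeasurableSpace Ω} {μ : Measure Ω}
    [IsFiniteMeasure μ] (hm : m ≤ mΩ) {c : ℝ} {f : Ω → ℝ} (hf : Integrable f μ)
    (h : (fun _ ↦ c) ≤ᵐ[μ] μ[f | m]) : μ[fun ω ↦ c - f ω | m] ≤ᵐ[μ] 0 := by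
  filter_upwards [condExp_sub (integrable_const c) hf m, h] with ω h_sub hω
  refine h_sub.trans_le ?_
  rw [Pi.sub_apply, condExp_const hm]
  exact sub_nonpos.mpr hω

theorem eprocess_false_alert_control_general
    {Ω : Type*} {mΩ : MeasurableSpace Ω} {P : Measure Ω} [IsProbabilityMeasure P]
    (𝓕 : Filtration ℕ mΩ) (ε : ℝ) (M lam : ℕ → Ω → ℝ)
    (hM : ∀ t, Measurable[𝓕 (t + 1)] (M (t + 1)))
    (hM_int : ∀ t, Integrable (M (t + 1)) P)
    (hlam : ∀ t, StronglyMeasurable[𝓕 t] (lam (t + 1)))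
    (hlam_nonneg : ∀ t, 0 ≤ᵐ[P] lam (t + 1))
    (h_solvent : ∀ t, ∀ᵐ ω ∂P, 0 ≤ 1 + lam (t + 1) ω * (ε - M (t + 1) ω))
    (h_null : ∀ t, (fun _ ↦ ε) ≤ᵐ[P] P[M (t + 1) | 𝓕 t])
    (X : ℕ → Ω → ℝ)
    (hX : ∀ t ω, X t ω = ∏ i ∈ Finset.Icc 1 t, (1 + lam i ω * (ε - M i ω)))
    (α : ℝ) (hα : 0 < α) :
    P {ω | ∃ t : ℕ, 1 / α ≤ X t ω} ≤ ENNReal.ofReal α := by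
  obtain rfl : X = wealth lam fun t ω ↦ ε - M t ω := funext₂ hX
  exact measure_exists_wealth_ge_le (D := fun t ω ↦ ε - M t ω) hlam hlam_nonneg
    (fun t ↦ stronglyMeasurable_const.sub (hM t).stronglyMeasurable)
    (fun t ↦ (integrable_const ε).sub (hM_int t))
    (fun t ↦ condExp_const_sub_nonpos (𝓕.le t) (hM_int t) (h_null t)) h_solvent hα

/-- The paper's anytime-valid false-alert guarantee: under the null
`E[M t | 𝓕 (t-1)] ≥ ε`, the e-process `X t = ∏_{i=1}^t (1 + λ i (ε - M i))` (with `X 0 = 1`)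
satisfies `P(∃ t, X t ≥ 1/α) ≤ α` for every `α ∈ (0,1)`: the hitting-time test that raises a
tracking-failure alert as soon as `X t ≥ 1/α` has Type-I error at most `α`. -/
theorem eprocess_false_alert_control
    {Ω : Type*} {mΩ : MeasurableSpace Ω} {P : Measure Ω} [IsProbabilityMeasure P]
    (𝓕 : Filtration ℕ mΩ) (ε : ℝ) (hε : ε ∈ Set.Ioo (0 : ℝ) 1)
    (M lam : ℕ → Ω → ℝ)
    (hMadapted : Adapted 𝓕 M)
    (hMbdd : ∀ t, ∀ᵐ ω ∂P, M t ω ∈ Set.Icc (0 : ℝ) 1)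
    (hMint : ∀ t, Integrable (M t) P)
    (hpred : ∀ t, 1 ≤ t → StronglyMeasurable[𝓕 (t - 1)] (lam t))
    (hlam : ∀ t, ∀ᵐ ω ∂P, lam t ω ∈ Set.Icc (0 : ℝ) 1)
    (hnull : ∀ t, 1 ≤ t → (fun _ : Ω => ε) ≤ᵐ[P] P[M t | 𝓕 (t - 1)])
    (X : ℕ → Ω → ℝ)
    (hX : ∀ t ω, X t ω = ∏ i ∈ Finset.Icc 1 t, (1 + lam i ω * (ε - M i ω)))
    (α : ℝ) (hα : α ∈ Set.Ioo (0 : ℝ) 1) :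
    P {ω | ∃ t : ℕ, (1 / α : ℝ) ≤ X t ω} ≤ ENNReal.ofReal α := by
  have h_solvent (t : ℕ) : ∀ᵐ ω ∂P, 0 ≤ 1 + lam (t + 1) ω * (ε - M (t + 1) ω) := by
    filter_upwards [hlam (t + 1), hMbdd (t + 1)] with ω hl hm
      using one_add_mul_sub_nonneg hl hε.1.le hm.2
  exact eprocess_false_alert_control_general 𝓕 ε M lam (fun t ↦ hMadapted (t + 1))
    (fun t ↦ hMint (t + 1)) (fun t ↦ hpred (t + 1) t.succ_pos)
    (fun t ↦ (hlam (t + 1)).mono fun _ hl ↦ hl.1) h_solvent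
    (fun t ↦ hnull (t + 1) t.succ_pos) X hX α hα.1
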